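/- Let N_t ≥ 1 be an integer, let α ∈ (0,1], let θ = exp(2πi/N_t), and for n ∈ {1, …, N_t} set λ_n^{(α)} = 3/2 − 2·α^{1/N_t}·θ^{n−1} + (1/2)·α^{2/N_t}·θ^{2(n−1)} ∈ ℂ. Then Re(λ_n^{(α)}) ≥ 0 for all n, and Re(λ_n^{(α)}) = 0 holds if and only if α = 1 and n = 1; in particular, if α ∈ (0,1) then Re(λ_n^{(α)}) > 0 for all n. -/

import Mathlib

open Complex

/-- The eigenvalues `λ_n^{(α)} = 3/2 − 2 α^{1/N_t} θ^{n−1} + (1/2) α^{2/N_t} θ^{2(n−1)}`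
of the Strang-type α-circulant BDF2 matrix, with `θ = e^{2πi/N_t}`; here the index
`n : Fin N_t` is 0-based, so `lamBDF2 Nt α n` corresponds to `λ_{n+1}^{(α)}`. -/
noncomputable def lamBDF2 (Nt : ℕ) (α : ℝ) (n : Fin Nt) : ℂ :=
  3 / 2 - 2 * ((α ^ ((1 : ℝ) / Nt) : ℝ) : ℂ) * Complex.exp (2 * Real.pi * Complex.I / Nt) ^ (n : ℕ)
    + (1 / 2) * ((α ^ ((2 : ℝ) / Nt) : ℝ) : ℂ) *
        Complex.exp (2 * Real.pi * Complex.I / Nt) ^ (2 * (n : ℕ))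

/-! Each `λ_n^{(α)}` is the value at an `N_t`-th root `ε` of `α` of the BDF2 generating polynomial
`p(z) = 3/2 − 2z + z²/2`. Completing the square gives `Re p(z) = (1 − Re z)² + (1 − ‖z‖²)/2`, so on
the closed unit disc `Re p` is nonnegative and vanishes only at `z = 1`; and `ε = 1` forces both
its modulus `α^{1/N_t}` and its phase `θ^{n−1}` to be `1`. -/

/-- The generating polynomial `r₀ + r₁ z + r₂ z²` of the BDF2 coefficients, as a function on `ℂ`;
its values at the `N_t`-th roots of `α` are the eigenvalues `λ_n^{(α)}`. -/
noncomputable def bdf2Symbol (z : ℂ) : ℂ :=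
  3 / 2 - 2 * z + 1 / 2 * z ^ 2

/-- The point `ε = α^{1/N_t} θ^n` at which the generating polynomial is evaluated. The exponent `n`
is 0-based, as in `lamBDF2`, but ranges over all of `ℕ`. -/
noncomputable def circulantNode (Nt : ℕ) (α : ℝ) (n : ℕ) : ℂ :=
  (α ^ ((1 : ℝ) / Nt) : ℝ) * exp (2 * Real.pi * I / Nt) ^ n

section Symbol

theorem re_bdf2Symbol (z : ℂ) : (bdf2Symbol z).re = (1 - z.re) ^ 2 + (1 - ‖z‖ ^ 2) / 2 := by
  have re_eq : (bdf2Symbol z).re = 3 / 2 - 2 * z.re + 1 / 2 * (z.re ^ 2 - z.im ^ 2) := by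
    simp [bdf2Symbol, pow_two]
  rw [re_eq, Complex.sq_norm, normSq_apply]
  ring

variable {z : ℂ}

theorem re_bdf2Symbol_nonneg (hz : ‖z‖ ≤ 1) : 0 ≤ (bdf2Symbol z).re := by
  have : ‖z‖ ^ 2 ≤ 1 := pow_le_one₀ (norm_nonneg z) hz
  rw [re_bdf2Symbol]
  linarith [sq_nonneg (1 - z.re)]

theorem eq_one_of_re_eq_one_of_norm_le_one (hre : z.re = 1) (hz : ‖z‖ ≤ 1) : z = 1 := by
  have norm_eq : z.re = ‖z‖ := le_antisymm (re_le_norm z) (hre ▸ hz)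
  rw [eq_coe_norm_of_nonneg (re_eq_norm.mp norm_eq), ← norm_eq, hre, ofReal_one]

theorem re_bdf2Symbol_eq_zero_iff (hz : ‖z‖ ≤ 1) : (bdf2Symbol z).re = 0 ↔ z = 1 := by
  constructor
  · intro h
    have norm_sq_le : ‖z‖ ^ 2 ≤ 1 := pow_le_one₀ (norm_nonneg z) hz
    have re_sub_sq : (1 - z.re) ^ 2 = 0 := by
      rw [re_bdf2Symbol] at h
      linarith [sq_nonneg (1 - z.re)]
    exact eq_one_of_re_eq_one_of_norm_le_one (sub_eq_zero.mp (sq_eq_zero_iff.mp re_sub_sq)).symm hz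
  · rintro rfl
    simp [re_bdf2Symbol]

end Symbol

theorem ofReal_mul_eq_one_iff {r : ℝ} {w : ℂ} (hr : 0 ≤ r) (hw : ‖w‖ = 1) :
    (r : ℂ) * w = 1 ↔ r = 1 ∧ w = 1 := by
  constructor
  · intro h
    have r_eq : r = 1 := by
      simpa only [norm_mul, Complex.norm_of_nonneg hr, hw, mul_one, norm_one] using congrArg norm h
    exact ⟨r_eq, by simpa only [r_eq, ofReal_one, one_mul] using h⟩
  · rintro ⟨rfl, rfl⟩
    simp

theorem norm_exp_two_pi_mul_I_div_pow (Nt n : ℕ) : ‖exp (2 * Real.pi * I / Nt) ^ n‖ = 1 := by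
  have re_eq_zero : (2 * Real.pi * I / Nt : ℂ).re = 0 := by simp
  rw [norm_pow, norm_exp, re_eq_zero, Real.exp_zero, one_pow]

section Node

variable {Nt : ℕ} {α : ℝ}

theorem norm_circulantNode_le_one (hα : α ∈ Set.Icc (0 : ℝ) 1) (n : ℕ) :
    ‖circulantNode Nt α n‖ ≤ 1 := by
  rw [circulantNode, norm_mul, norm_exp_two_pi_mul_I_div_pow, mul_one,
    Complex.norm_of_nonneg (Real.rpow_nonneg hα.1 _)]
  exact Real.rpow_le_one hα.1 hα.2 (by positivity)

theorem circulantNode_eq_one_iff (hNt : Nt ≠ 0) (hα : 0 ≤ α) (n : ℕ) :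
    circulantNode Nt α n = 1 ↔ α = 1 ∧ Nt ∣ n := by
  have modulus_eq_one_iff : α ^ ((1 : ℝ) / Nt) = 1 ↔ α = 1 := by
    rw [← Real.rpow_left_inj hα zero_le_one (one_div_ne_zero (Nat.cast_ne_zero.mpr hNt)),
      Real.one_rpow]
  rw [circulantNode, ofReal_mul_eq_one_iff (Real.rpow_nonneg hα _)
    (norm_exp_two_pi_mul_I_div_pow Nt n), modulus_eq_one_iff,
    (isPrimitiveRoot_exp Nt hNt).pow_eq_one_iff_dvd]

theorem lamBDF2_eq_bdf2Symbol (hα : 0 ≤ α) (n : Fin Nt) :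
    lamBDF2 Nt α n = bdf2Symbol (circulantNode Nt α n) := by
  have root_sq : α ^ ((2 : ℝ) / Nt) = (α ^ ((1 : ℝ) / Nt)) ^ 2 := by
    rw [← Real.rpow_mul_natCast hα]
    congr 1
    push_cast
    ring
  rw [lamBDF2, bdf2Symbol, circulantNode, root_sq]
  push_cast
  ring

end Node

/-- For `α ∈ (0,1]`, `Re(λ_n^{(α)}) ≥ 0` for all `n`, with equality iff `α = 1` and
`n = 1` (0-based: `n = 0`); in particular `Re(λ_n^{(α)}) > 0` for all `n` when `α < 1`. -/
theorem stmt10 (Nt : ℕ) (hNt : 1 ≤ Nt) (α : ℝ) (hα : α ∈ Set.Ioc (0 : ℝ) 1) :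
    (∀ n : Fin Nt, 0 ≤ (lamBDF2 Nt α n).re) ∧
      (∀ n : Fin Nt, (lamBDF2 Nt α n).re = 0 ↔ α = 1 ∧ (n : ℕ) = 0) ∧
      (α < 1 → ∀ n : Fin Nt, 0 < (lamBDF2 Nt α n).re) := by
  have hNt' : Nt ≠ 0 := Nat.one_le_iff_ne_zero.mp hNt
  have norm_node_le_one (n : Fin Nt) : ‖circulantNode Nt α n‖ ≤ 1 :=
    norm_circulantNode_le_one (Set.Ioc_subset_Icc_self hα) n
  have re_nonneg (n : Fin Nt) : 0 ≤ (lamBDF2 Nt α n).re := by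
    rw [lamBDF2_eq_bdf2Symbol hα.1.le]
    exact re_bdf2Symbol_nonneg (norm_node_le_one n)
  have re_eq_zero_iff (n : Fin Nt) : (lamBDF2 Nt α n).re = 0 ↔ α = 1 ∧ (n : ℕ) = 0 := by
    rw [lamBDF2_eq_bdf2Symbol hα.1.le, re_bdf2Symbol_eq_zero_iff (norm_node_le_one n),
      circulantNode_eq_one_iff hNt' hα.1.le, Nat.dvd_iff_mod_eq_zero, Nat.mod_eq_of_lt n.isLt]
  refine ⟨re_nonneg, re_eq_zero_iff, fun hα_lt n => (re_nonneg n).lt_of_ne' fun h => ?_⟩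
  exact hα_lt.ne ((re_eq_zero_iff n).mp h).1
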